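/- Let n be a natural number and let Y, Q ⊆ {1, …, n}. Consider the simple graph on the 3n vertices {u_i, v_i, w_i : i ∈ {1, …, n}} whose edges are exactly: {u_i, v_i} for each i ∈ Y, and {v_i, w_i} for each i ∈ Q. Then the matching number of this graph equals |Y ∪ Q|. -/

import Mathlib

attribute [local instance] Classical.propDecidable

/-- `M` is a matching of `G`, viewed as a finite set of pairwise vertex-disjoint edges. -/
def SimpleGraph.IsMatchingFinset {V : Type*} (G : SimpleGraph V) (M : Finset (Sym2 V)) : Prop :=
  (↑M : Set (Sym2 V)) ⊆ G.edgeSet ∧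
    (M : Set (Sym2 V)).Pairwise fun e f => ∀ v, v ∈ e → v ∉ f

/-- The matching number of `G`: the largest cardinality of a matching. -/
noncomputable def SimpleGraph.matchingNumber {V : Type*} [Fintype V] (G : SimpleGraph V) : ℕ :=
  sSup {n | ∃ M : Finset (Sym2 V), G.IsMatchingFinset M ∧ M.card = n}

/-- The graph on vertices `{u_i, v_i, w_i : i ∈ [n]}` (encoded as `Fin n ⊕ Fin n ⊕ Fin n`,
with `u_i = inl i`, `v_i = inr (inl i)`, `w_i = inr (inr i)`) whose edges are `{u_i, v_i}` for
`i ∈ Y` and `{v_i, w_i}` for `i ∈ Q`. -/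
noncomputable def matchingEncodingGraph (n : ℕ) (Y Q : Finset (Fin n)) :
    SimpleGraph (Fin n ⊕ Fin n ⊕ Fin n) :=
  SimpleGraph.fromEdgeSet
    ({e | ∃ i ∈ Y, e = s(Sum.inl i, Sum.inr (Sum.inl i))} ∪
      {e | ∃ i ∈ Q, e = s(Sum.inr (Sum.inl i), Sum.inr (Sum.inr i))})

/-!
The vertices `v_i` with `i ∈ Y ∪ Q` cover all edges, so no matching has more than `|Y ∪ Q|` edges.
Conversely, choosing one edge at each of these vertices gives a matching, since the edges at
distinct `v_i` share no endpoint.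
-/

section General

variable {V : Type*} {G : SimpleGraph V}

theorem isVertexCover_iff_forall_mem_edgeSet {c : Set V} :
    G.IsVertexCover c ↔ ∀ e ∈ G.edgeSet, ∃ v ∈ c, v ∈ e := by
  simp [SimpleGraph.IsVertexCover, Sym2.forall, and_or_left, exists_or]

theorem card_le_card_of_isMatchingFinset_of_isVertexCover {M : Finset (Sym2 V)} {C : Finset V}
    (hM : G.IsMatchingFinset M) (hC : G.IsVertexCover C) : M.card ≤ C.card := by
  have exists_mem_cover : ∀ e ∈ M, ∃ v ∈ C, v ∈ e := fun e he =>
    isVertexCover_iff_forall_mem_edgeSet.mp hC e (hM.1 he)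
  refine Finset.card_le_card_of_forall_subsingleton (fun e v => v ∈ e) exists_mem_cover ?_
  rintro v - e ⟨he, hve⟩ f ⟨hf, hvf⟩
  by_contra hne
  exact hM.2 he hf hne v hve hvf

theorem matchingNumber_eq_card_of_isVertexCover [Fintype V] {M : Finset (Sym2 V)} {C : Finset V}
    (hM : G.IsMatchingFinset M) (hC : G.IsVertexCover C) (hcard : M.card = C.card) :
    G.matchingNumber = C.card := by
  refine IsGreatest.csSup_eq ⟨⟨M, hM, hcard⟩, ?_⟩
  rintro _ ⟨N, hN, rfl⟩
  exact card_le_card_of_isMatchingFinset_of_isVertexCover hN hC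

variable {ι : Type*} {e : ι → Sym2 V}

theorem injOn_of_pairwise_forall_notMem {s : Set ι}
    (hdisj : s.Pairwise fun i j => ∀ v ∈ e i, v ∉ e j) : s.InjOn e := by
  intro i hi j hj hij
  by_contra hne
  exact hdisj hi hj hne _ (e i).out_fst_mem (hij ▸ (e i).out_fst_mem)

theorem exists_isMatchingFinset_card_eq {s : Finset ι} (he : ∀ i ∈ s, e i ∈ G.edgeSet)
    (hdisj : (s : Set ι).Pairwise fun i j => ∀ v ∈ e i, v ∉ e j) :
    ∃ M, G.IsMatchingFinset M ∧ M.card = s.card := by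
  refine ⟨s.image e, ?_, Finset.card_image_of_injOn (injOn_of_pairwise_forall_notMem hdisj)⟩
  rw [SimpleGraph.IsMatchingFinset, Finset.coe_image]
  exact ⟨Set.image_subset_iff.mpr he, Set.Pairwise.image hdisj⟩

end General

section EncodingGraph

variable {α : Type*} {n : ℕ} {Y Q : Finset (Fin n)}

theorem mem_edgeSet_matchingEncodingGraph {e : Sym2 (Fin n ⊕ Fin n ⊕ Fin n)} :
    e ∈ (matchingEncodingGraph n Y Q).edgeSet ↔
      (∃ i ∈ Y, e = s(.inl i, .inr (.inl i))) ∨ ∃ i ∈ Q, e = s(.inr (.inl i), .inr (.inr i)) := by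
  rw [matchingEncodingGraph, SimpleGraph.edgeSet_fromEdgeSet]
  refine ⟨And.left, fun he => ⟨he, ?_⟩⟩
  rcases he with ⟨i, -, rfl⟩ | ⟨i, -, rfl⟩ <;> simp

/-- The vertices `v_i` for `i ∈ s`. With `s = Y ∪ Q` they form a minimum vertex cover of
`matchingEncodingGraph n Y Q`. -/
def matchingEncodingCover (s : Finset α) : Finset (α ⊕ α ⊕ α) :=
  s.map (Function.Embedding.inl.trans Function.Embedding.inr)

theorem card_matchingEncodingCover (s : Finset α) : (matchingEncodingCover s).card = s.card :=
  Finset.card_map _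

theorem isVertexCover_matchingEncodingCover :
    (matchingEncodingGraph n Y Q).IsVertexCover (matchingEncodingCover (Y ∪ Q)) := by
  rw [isVertexCover_iff_forall_mem_edgeSet]
  intro e he
  rcases mem_edgeSet_matchingEncodingGraph.mp he with ⟨i, hi, rfl⟩ | ⟨i, hi, rfl⟩
  · exact ⟨_, Finset.mem_map_of_mem _ (Finset.mem_union_left Q hi), Sym2.mem_mk_right _ _⟩
  · exact ⟨_, Finset.mem_map_of_mem _ (Finset.mem_union_right Y hi), Sym2.mem_mk_left _ _⟩

/-- The edge chosen at `v_i` in a maximum matching of `matchingEncodingGraph n Y Q`: `{u_i, v_i}`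
if `i ∈ Y`, and `{v_i, w_i}` otherwise. It is an edge of that graph only for `i ∈ Y ∪ Q`. -/
noncomputable def matchingEncodingEdge (Y : Finset α) (i : α) : Sym2 (α ⊕ α ⊕ α) :=
  if i ∈ Y then s(.inl i, .inr (.inl i)) else s(.inr (.inl i), .inr (.inr i))

theorem matchingEncodingEdge_mem_edgeSet {i : Fin n} (hi : i ∈ Y ∪ Q) :
    matchingEncodingEdge Y i ∈ (matchingEncodingGraph n Y Q).edgeSet := by
  rw [mem_edgeSet_matchingEncodingGraph, matchingEncodingEdge]
  split_ifs with hY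
  · exact .inl ⟨i, hY, rfl⟩
  · exact .inr ⟨i, (Finset.mem_union.mp hi).resolve_left hY, rfl⟩

theorem index_eq_of_mem_matchingEncodingEdge {Y : Finset α} {i : α} {v : α ⊕ α ⊕ α}
    (hv : v ∈ matchingEncodingEdge Y i) : Sum.elim id (Sum.elim id id) v = i := by
  rw [matchingEncodingEdge] at hv
  split_ifs at hv <;> rcases Sym2.mem_iff.mp hv with rfl | rfl <;> rfl

theorem pairwise_forall_notMem_matchingEncodingEdge (Y : Finset α) :
    Pairwise fun i j => ∀ v ∈ matchingEncodingEdge Y i, v ∉ matchingEncodingEdge Y j :=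
  fun _ _ hij _ hvi hvj => hij <|
    (index_eq_of_mem_matchingEncodingEdge hvi).symm.trans (index_eq_of_mem_matchingEncodingEdge hvj)

end EncodingGraph

/-- The matching number of the inner-product encoding graph equals `|Y ∪ Q|`. -/
theorem matchingEncodingGraph_matchingNumber (n : ℕ) (Y Q : Finset (Fin n)) :
    (matchingEncodingGraph n Y Q).matchingNumber = (Y ∪ Q).card := by
  obtain ⟨M, hM, hM_card⟩ :
      ∃ M, (matchingEncodingGraph n Y Q).IsMatchingFinset M ∧ M.card = (Y ∪ Q).card :=
    exists_isMatchingFinset_card_eq (fun _ => matchingEncodingEdge_mem_edgeSet)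
      ((pairwise_forall_notMem_matchingEncodingEdge Y).set_pairwise _)
  have hC_card := card_matchingEncodingCover (Y ∪ Q)
  calc (matchingEncodingGraph n Y Q).matchingNumber
      = (matchingEncodingCover (Y ∪ Q)).card :=
        matchingNumber_eq_card_of_isVertexCover hM isVertexCover_matchingEncodingCover
          (hM_card.trans hC_card.symm)
    _ = (Y ∪ Q).card := hC_card
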